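/- arXiv:1503.08478 — 3 statements merged into one kernel-verified Lean document; each statement's English description precedes it below -/
import Mathlib

section
/- If a smooth vector field Y : U → ℝ^m lies in ker g, then for every smooth vector field X : U → ℝ^m the covariant derivative ∇_X Y also lies in ker g, i.e. Σ_j g_{ij}(x) (∇_X Y)^j(x) = 0 for all x ∈ U and all i. -/
/-!
Differentiating `Σ_j g_{ij} Y^j = 0` in the direction `x^k` gives
`Σ_j g_{ij} ∂_k Y^j + Σ_j (∂_k g_{ij}) Y^j = 0` (`pd_contraction`). Substituting the parallelism
equation for `∂_k g_{ij}`, the terms `Γ^l_{ki} g_{lj} Y^j` cancel because `Y ∈ ker g`, and the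
terms `Γ^l_{kj} g_{il} Y^j` complete `∂_k Y` to the covariant derivative (`contraction_coord`).
The general case follows because `∇_X Y` is linear in the components of `X`.
-/

/-- Partial derivative in the `i`-th coordinate direction. -/
noncomputable def pd {m : ℕ} (i : Fin m) (f : (Fin m → ℝ) → ℝ) (y : Fin m → ℝ) : ℝ :=
  fderiv ℝ f y (Pi.single i 1)

/-- Covariant derivative `(∇_X Y)^k = Σ_i X^i ∂Y^k/∂x^i + Σ_{i,j} Γ^k_{ij} X^i Y^j`
of the vector field `Y` along `X`, for the connection with Christoffel symbols `Γ`. -/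
noncomputable def covDeriv {m : ℕ} (Γ : Fin m → Fin m → Fin m → (Fin m → ℝ) → ℝ)
    (X Y : (Fin m → ℝ) → Fin m → ℝ) (k : Fin m) (y : Fin m → ℝ) : ℝ :=
  (∑ i, X y i * pd i (fun z => Y z k) y) + ∑ i, ∑ j, Γ k i j y * X y i * Y y j

/-- The product rule for `∂_k (Σ_j g_{ij} Y^j) = 0`, valid since `Y ∈ ker g` on an open set. -/
theorem pd_contraction {m : ℕ} {U : Set (Fin m → ℝ)} (hU : IsOpen U)
    {g : (Fin m → ℝ) → Fin m → Fin m → ℝ}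
    (hg : ∀ i j, ContDiffOn ℝ (⊤ : ℕ∞) (fun y => g y i j) U)
    {Y : (Fin m → ℝ) → Fin m → ℝ}
    (hY : ∀ k, ContDiffOn ℝ (⊤ : ℕ∞) (fun y => Y y k) U)
    (hker : ∀ y ∈ U, ∀ i, ∑ j, g y i j * Y y j = 0)
    {y : Fin m → ℝ} (hy : y ∈ U) (i k : Fin m) :
    ∑ j, (g y i j * pd k (fun z => Y z j) y + pd k (fun z => g z i j) y * Y y j) = 0 := by
  have hUy : U ∈ nhds y := hU.mem_nhds hy
  have hgd (j : Fin m) : DifferentiableAt ℝ (fun z => g z i j) y :=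
    ((hg i j).contDiffAt hUy).differentiableAt (by simp)
  have hYd (j : Fin m) : DifferentiableAt ℝ (fun z => Y z j) y :=
    ((hY j).contDiffAt hUy).differentiableAt (by simp)
  have hsum := HasFDerivAt.fun_sum (u := Finset.univ)
    (fun j _ => (hgd j).hasFDerivAt.mul (hYd j).hasFDerivAt)
  have hzero : (fun z => ∑ j, g z i j * Y z j) =ᶠ[nhds y] fun _ => (0 : ℝ) := by
    filter_upwards [hUy] with z hz using hker z hz i
  have heq := hsum.unique ((hasFDerivAt_const (0 : ℝ) y).congr_of_eventuallyEq hzero)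
  have happ := congrArg (fun L => L (Pi.single k 1)) heq
  simpa [pd, mul_comm] using happ

/-- The theorem for `X` a coordinate field: `Σ_j g_{ij} (∇_k Y)^j = 0`. -/
theorem contraction_coord {m : ℕ} {U : Set (Fin m → ℝ)} (hU : IsOpen U)
    {Γ : Fin m → Fin m → Fin m → (Fin m → ℝ) → ℝ}
    {g : (Fin m → ℝ) → Fin m → Fin m → ℝ}
    (hg : ∀ i j, ContDiffOn ℝ (⊤ : ℕ∞) (fun y => g y i j) U)
    (hpar : ∀ y ∈ U, ∀ i j k,
      pd k (fun z => g z i j) y = ∑ l, (Γ l k i y * g y l j + Γ l k j y * g y i l))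
    {Y : (Fin m → ℝ) → Fin m → ℝ}
    (hY : ∀ k, ContDiffOn ℝ (⊤ : ℕ∞) (fun y => Y y k) U)
    (hker : ∀ y ∈ U, ∀ i, ∑ j, g y i j * Y y j = 0)
    {y : Fin m → ℝ} (hy : y ∈ U) (i k : Fin m) :
    ∑ j, g y i j * (pd k (fun z => Y z j) y + ∑ l, Γ j k l y * Y y l) = 0 := by
  have h := pd_contraction hU hg hY hker hy i k
  have h1 : ∑ j, ∑ l, Γ l k i y * g y l j * Y y j = 0 := by
    rw [Finset.sum_comm]
    simp only [mul_assoc, ← Finset.mul_sum, hker y hy, mul_zero, Finset.sum_const_zero]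
  have h2 : ∑ j, ∑ l, Γ l k j y * g y i l * Y y j
      = ∑ j, g y i j * ∑ l, Γ j k l y * Y y l := by
    rw [Finset.sum_comm]
    simp only [Finset.mul_sum]
    exact Finset.sum_congr rfl fun _ _ => Finset.sum_congr rfl fun _ _ => by ring
  simp only [hpar y hy, Finset.sum_mul, add_mul, Finset.sum_add_distrib, h1, h2, zero_add] at h
  simpa only [mul_add, Finset.sum_add_distrib] using h

/-- `ker g` is parallel: if `Y ∈ ker g` then `∇_X Y ∈ ker g`. -/
theorem ker_parallel {m : ℕ} (U : Set (Fin m → ℝ)) (hU : IsOpen U)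
    (Γ : Fin m → Fin m → Fin m → (Fin m → ℝ) → ℝ)
    (hΓ : ∀ k i j, ContDiffOn ℝ (⊤ : ℕ∞) (Γ k i j) U)
    (g : (Fin m → ℝ) → Fin m → Fin m → ℝ)
    (hg : ∀ i j, ContDiffOn ℝ (⊤ : ℕ∞) (fun y => g y i j) U)
    (hgsym : ∀ y ∈ U, ∀ i j, g y i j = g y j i)
    -- `g` is parallel with respect to the connection:
    (hpar : ∀ y ∈ U, ∀ i j k,
      pd k (fun z => g z i j) y = ∑ l, (Γ l k i y * g y l j + Γ l k j y * g y i l))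
    (Y : (Fin m → ℝ) → Fin m → ℝ)
    (hY : ∀ k, ContDiffOn ℝ (⊤ : ℕ∞) (fun y => Y y k) U)
    -- `Y` lies in `ker g`:
    (hker : ∀ y ∈ U, ∀ i, ∑ j, g y i j * Y y j = 0)
    (X : (Fin m → ℝ) → Fin m → ℝ)
    (hX : ∀ k, ContDiffOn ℝ (⊤ : ℕ∞) (fun y => X y k) U) :
    ∀ y ∈ U, ∀ i, ∑ j, g y i j * covDeriv Γ X Y j y = 0 := by
  intro y hy i
  have hcov (j : Fin m) : covDeriv Γ X Y j y
      = ∑ k, X y k * (pd k (fun z => Y z j) y + ∑ l, Γ j k l y * Y y l) := by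
    simp only [covDeriv, mul_add, Finset.sum_add_distrib, Finset.mul_sum]
    congr 1
    exact Finset.sum_congr rfl fun _ _ => Finset.sum_congr rfl fun _ _ => by ring
  calc ∑ j, g y i j * covDeriv Γ X Y j y
      = ∑ j, ∑ k, X y k * (g y i j * (pd k (fun z => Y z j) y + ∑ l, Γ j k l y * Y y l)) := by
        refine Finset.sum_congr rfl fun j _ => ?_
        rw [hcov, Finset.mul_sum]
        exact Finset.sum_congr rfl fun k _ => mul_left_comm _ _ _
    _ = ∑ k, X y k *
          ∑ j, g y i j * (pd k (fun z => Y z j) y + ∑ l, Γ j k l y * Y y l) := by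
        rw [Finset.sum_comm]
        exact Finset.sum_congr rfl fun k _ => (Finset.mul_sum _ _ _).symm
    _ = 0 := Finset.sum_eq_zero fun k _ => by
        rw [contraction_coord hU hg hpar hY hker hy i k, mul_zero]
end

section
/- Suppose in addition that the connection is torsion-free: Γ^k_{ij} = Γ^k_{ji} for all i,j,k. If smooth vector fields Y, Z : U → ℝ^m both lie in ker g, then their Lie bracket [Y,Z], with components [Y,Z]^k = Σ_i (Y^i ∂Z^k/∂x^i − Z^i ∂Y^k/∂x^i), also lies in ker g. -/
/-- Lie bracket `[Y,Z]^k = Σ_i (Y^i ∂Z^k/∂x^i − Z^i ∂Y^k/∂x^i)` of vector fields. -/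
noncomputable def lieBracket {m : ℕ} (Y Z : (Fin m → ℝ) → Fin m → ℝ)
    (k : Fin m) (y : Fin m → ℝ) : ℝ :=
  ∑ i, (Y y i * pd i (fun z => Z z k) y - Z y i * pd i (fun z => Y z k) y)

/-- If `Y` lies in the kernel of the parallel form `g`, then so does `∇_k Y`; the identity is
`g(∂_i, ∇_k Y) = 0` with the Christoffel term moved to the right-hand side. -/
theorem ker_covariant_derivative {m : ℕ} (U : Set (Fin m → ℝ)) (hU : IsOpen U)
    (Γ : Fin m → Fin m → Fin m → (Fin m → ℝ) → ℝ)
    (g : (Fin m → ℝ) → Fin m → Fin m → ℝ)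
    (hg : ∀ i j, ContDiffOn ℝ (⊤ : ℕ∞) (fun y => g y i j) U)
    (hpar : ∀ y ∈ U, ∀ i j k,
      pd k (fun z => g z i j) y = ∑ l, (Γ l k i y * g y l j + Γ l k j y * g y i l))
    (Y : (Fin m → ℝ) → Fin m → ℝ)
    (hY : ∀ k, ContDiffOn ℝ (⊤ : ℕ∞) (fun y => Y y k) U)
    (hkerY : ∀ y ∈ U, ∀ i, ∑ j, g y i j * Y y j = 0)
    (y : Fin m → ℝ) (hy : y ∈ U) (i k : Fin m) :
    ∑ j, g y i j * pd k (fun z => Y z j) y = -∑ j, ∑ l, Γ l k j y * g y i l * Y y j := by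
  have hgd : ∀ j, DifferentiableAt ℝ (fun z => g z i j) y := fun j =>
    ((hg i j).contDiffAt (hU.mem_nhds hy)).differentiableAt (by simp)
  have hYd : ∀ j, DifferentiableAt ℝ (fun z => Y z j) y := fun j =>
    ((hY j).contDiffAt (hU.mem_nhds hy)).differentiableAt (by simp)
  have hzero : fderiv ℝ (fun z => ∑ j, g z i j * Y z j) y = 0 := by
    have h : (fun z => ∑ j, g z i j * Y z j) =ᶠ[nhds y] fun _ => (0 : ℝ) := by
      filter_upwards [hU.mem_nhds hy] with z hz using hkerY z hz i
    rw [h.fderiv_eq]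
    simp
  have hleib : ∑ j, (g y i j * pd k (fun z => Y z j) y
      + pd k (fun z => g z i j) y * Y y j) = 0 := by
    have h := congrArg (fun L => L (Pi.single k 1)) hzero
    rw [fderiv_fun_sum (fun j _ => (hgd j).fun_mul (hYd j))] at h
    simp only [ContinuousLinearMap.sum_apply, ContinuousLinearMap.zero_apply] at h
    rw [← h]
    refine Finset.sum_congr rfl fun j _ => ?_
    rw [fderiv_fun_mul (hgd j) (hYd j)]
    simp [pd, mul_comm]
  -- The Christoffel term acting on the first slot of `g` vanishes because `Y ∈ ker g`.
  have hfirst : ∑ j, ∑ l, Γ l k i y * g y l j * Y y j = 0 := by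
    rw [Finset.sum_comm]
    refine Finset.sum_eq_zero fun l _ => ?_
    simp_rw [mul_assoc, ← Finset.mul_sum, hkerY y hy l, mul_zero]
  simp_rw [hpar y hy, Finset.sum_mul, add_mul, Finset.sum_add_distrib] at hleib
  linarith

/-- for a torsion-free connection for which `g` is parallel, `ker g` is
involutive: if `Y, Z ∈ ker g` then `[Y,Z] ∈ ker g`. -/
theorem ker_involutive {m : ℕ} (U : Set (Fin m → ℝ)) (hU : IsOpen U)
    (Γ : Fin m → Fin m → Fin m → (Fin m → ℝ) → ℝ)
    (hΓ : ∀ k i j, ContDiffOn ℝ (⊤ : ℕ∞) (Γ k i j) U)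
    -- the connection is torsion-free:
    (hΓsym : ∀ y ∈ U, ∀ k i j, Γ k i j y = Γ k j i y)
    (g : (Fin m → ℝ) → Fin m → Fin m → ℝ)
    (hg : ∀ i j, ContDiffOn ℝ (⊤ : ℕ∞) (fun y => g y i j) U)
    (hgsym : ∀ y ∈ U, ∀ i j, g y i j = g y j i)
    -- `g` is parallel with respect to the connection:
    (hpar : ∀ y ∈ U, ∀ i j k,
      pd k (fun z => g z i j) y = ∑ l, (Γ l k i y * g y l j + Γ l k j y * g y i l))
    (Y Z : (Fin m → ℝ) → Fin m → ℝ)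
    (hY : ∀ k, ContDiffOn ℝ (⊤ : ℕ∞) (fun y => Y y k) U)
    (hZ : ∀ k, ContDiffOn ℝ (⊤ : ℕ∞) (fun y => Z y k) U)
    -- `Y` and `Z` lie in `ker g`:
    (hkerY : ∀ y ∈ U, ∀ i, ∑ j, g y i j * Y y j = 0)
    (hkerZ : ∀ y ∈ U, ∀ i, ∑ j, g y i j * Z y j = 0) :
    ∀ y ∈ U, ∀ i, ∑ j, g y i j * lieBracket Y Z j y = 0 := by
  intro y hy i
  have hYk := ker_covariant_derivative U hU Γ g hg hpar Y hY hkerY y hy i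
  have hZk := ker_covariant_derivative U hU Γ g hg hpar Z hZ hkerZ y hy i
  have hsplit : ∑ j, g y i j * lieBracket Y Z j y
      = ∑ k, Y y k * (∑ j, g y i j * pd k (fun z => Z z j) y)
        - ∑ k, Z y k * (∑ j, g y i j * pd k (fun z => Y z j) y) := by
    simp_rw [lieBracket, Finset.mul_sum]
    rw [Finset.sum_comm, ← Finset.sum_sub_distrib]
    refine Finset.sum_congr rfl fun k _ => ?_
    rw [← Finset.sum_sub_distrib]
    exact Finset.sum_congr rfl fun j _ => by ring
  -- By torsion-freeness the Christoffel terms of `∇_Y Z` and `∇_Z Y` agree after swapping indices.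
  have hswap : ∑ k, Y y k * (∑ j, ∑ l, Γ l k j y * g y i l * Z y j)
      = ∑ k, Z y k * (∑ j, ∑ l, Γ l k j y * g y i l * Y y j) := by
    simp_rw [Finset.mul_sum]
    rw [Finset.sum_comm]
    refine Finset.sum_congr rfl fun j _ => Finset.sum_congr rfl fun k _ =>
      Finset.sum_congr rfl fun l _ => ?_
    rw [hΓsym y hy l k j]
    ring
  simp_rw [hsplit, hYk, hZk, mul_neg, Finset.sum_neg_distrib, hswap]
  ring
end

section
/- Let g be a symmetric positive definite q×q real matrix and let Q : {1,…,q}⁴ → ℝ satisfy the symmetries Q_{ijkl} = Q_{klij} = Q_{kjil} = Q_{ilkj} = Q_{jilk} for all i,j,k,l. Then the following are equivalent: (a) for every symmetric q×q real matrix ξ, Σ_{i,j,k,l} Q_{ijkl} ξ^{ik} ξ^{jl} = c · Σ_{i,j,k,l} g_{ij} g_{kl} ξ^{ik} ξ^{jl} (i.e. the Hessian sectional curvature is constant equal to c); (b) Q_{ijkl} = (c/2)(g_{ij} g_{kl} + g_{il} g_{jk}) for all i,j,k,l. -/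
/-!
The symmetries of `Q` say that `(ξ, η) ↦ Σ Q_{ijkl} ξ^{ik} η^{jl}` is a symmetric bilinear form
whose coefficients are symmetric in `i, k` and in `j, l`. For symmetric `ξ`, relabelling `j ↔ l`
turns `c⟨ξ,ξ⟩` into the quadratic form with coefficients `(c/2)(g_{ij} g_{kl} + g_{il} g_{jk})`,
which have the same symmetries (`sum_model_eq`). Hence (a) says that the quadratic form of the
difference of the two coefficient tensors vanishes on symmetric matrices. By polarization its
bilinear form vanishes too, and evaluating it on `e_i e_k + e_k e_i` and `e_j e_l + e_l e_j` gives
four times the coefficient, so the difference is zero (`eq_zero_of_form_eq_zero`).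
-/

/-- The bilinear form `(ξ, η) ↦ Σ S_{ijkl} ξ^{ik} η^{jl}` on square matrices. -/
def contractForm {q : ℕ} (S : Fin q → Fin q → Fin q → Fin q → ℝ)
    (ξ η : Matrix (Fin q) (Fin q) ℝ) : ℝ :=
  ∑ i, ∑ j, ∑ k, ∑ l, S i j k l * ξ i k * η j l

lemma contractForm_add_left {q : ℕ} (S : Fin q → Fin q → Fin q → Fin q → ℝ)
    (ξ ξ' η : Matrix (Fin q) (Fin q) ℝ) :
    contractForm S (ξ + ξ') η = contractForm S ξ η + contractForm S ξ' η := by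
  simp only [contractForm, ← Finset.sum_add_distrib, Matrix.add_apply, mul_add, add_mul]

lemma contractForm_add_right {q : ℕ} (S : Fin q → Fin q → Fin q → Fin q → ℝ)
    (ξ η η' : Matrix (Fin q) (Fin q) ℝ) :
    contractForm S ξ (η + η') = contractForm S ξ η + contractForm S ξ η' := by
  simp only [contractForm, ← Finset.sum_add_distrib, Matrix.add_apply, mul_add]

lemma contractForm_comm {q : ℕ} (S : Fin q → Fin q → Fin q → Fin q → ℝ)
    (hS : ∀ i j k l, S i j k l = S j i l k) (ξ η : Matrix (Fin q) (Fin q) ℝ) :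
    contractForm S ξ η = contractForm S η ξ := by
  unfold contractForm
  rw [Finset.sum_comm]
  refine Finset.sum_congr rfl fun j _ => Finset.sum_congr rfl fun i _ => ?_
  rw [Finset.sum_comm]
  refine Finset.sum_congr rfl fun l _ => Finset.sum_congr rfl fun k _ => ?_
  rw [hS i j k l]
  ring

lemma contractForm_single {q : ℕ} (S : Fin q → Fin q → Fin q → Fin q → ℝ)
    (i j k l : Fin q) :
    contractForm S (Matrix.single i k 1) (Matrix.single j l 1) = S i j k l := by
  simp [contractForm, Matrix.single_apply, ite_and]

/-- A tensor with the symmetries `i ↔ k`, `j ↔ l`, `(i,k) ↔ (j,l)` is determined by its quadratic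
form on symmetric matrices. -/
lemma eq_zero_of_form_eq_zero {q : ℕ} (S : Fin q → Fin q → Fin q → Fin q → ℝ)
    (h₁ : ∀ i j k l, S i j k l = S k j i l) (h₂ : ∀ i j k l, S i j k l = S i l k j)
    (h₃ : ∀ i j k l, S i j k l = S j i l k)
    (h : ∀ ξ : Matrix (Fin q) (Fin q) ℝ, ξ.IsSymm → contractForm S ξ ξ = 0)
    (i j k l : Fin q) : S i j k l = 0 := by
  have hsymm : ∀ a b : Fin q,
      (Matrix.single a b (1 : ℝ) + Matrix.single b a 1).IsSymm := fun a b => by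
    simp [Matrix.IsSymm, add_comm]
  have hpolar : ∀ ξ η : Matrix (Fin q) (Fin q) ℝ, ξ.IsSymm → η.IsSymm →
      contractForm S ξ η = 0 := fun ξ η hξ hη => by
    have hadd := h (ξ + η) (hξ.add hη)
    rw [contractForm_add_left, contractForm_add_right, contractForm_add_right,
      h ξ hξ, h η hη, contractForm_comm S h₃ η ξ] at hadd
    linarith
  have hval := hpolar _ _ (hsymm i k) (hsymm j l)
  simp only [contractForm_add_left, contractForm_add_right, contractForm_single] at hval
  linarith [h₁ i j k l, h₂ i j k l, h₁ i l k j]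

/-- On symmetric matrices, symmetrizing the coefficients of `c⟨ξ,ξ⟩` in `j, l` does not change
its value. -/
lemma sum_model_eq {q : ℕ} (g : Matrix (Fin q) (Fin q) ℝ) (hg : g.IsSymm) (c : ℝ)
    (ξ : Matrix (Fin q) (Fin q) ℝ) (hξ : ξ.IsSymm) :
    ∑ i, ∑ j, ∑ k, ∑ l, (c / 2) * (g i j * g k l + g i l * g j k) * ξ i k * ξ j l
      = c * ∑ i, ∑ j, ∑ k, ∑ l, g i j * g k l * ξ i k * ξ j l := by
  have hswap : ∑ i, ∑ j, ∑ k, ∑ l, g i l * g j k * ξ i k * ξ j l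
      = ∑ i, ∑ j, ∑ k, ∑ l, g i j * g k l * ξ i k * ξ j l := by
    refine Finset.sum_congr rfl fun i _ => ?_
    -- Bring both sums to the order `k, j, l` and exchange `j` with `l` on the left.
    rw [Finset.sum_comm]
    conv_rhs => rw [Finset.sum_comm]
    refine Finset.sum_congr rfl fun k _ => ?_
    rw [Finset.sum_comm]
    refine Finset.sum_congr rfl fun l _ => Finset.sum_congr rfl fun j _ => ?_
    rw [hg.apply k j, hξ.apply l j]
  have hsplit : ∑ i, ∑ j, ∑ k, ∑ l, (c / 2) * (g i j * g k l + g i l * g j k) * ξ i k * ξ j l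
      = (c / 2) * ∑ i, ∑ j, ∑ k, ∑ l, g i j * g k l * ξ i k * ξ j l
        + (c / 2) * ∑ i, ∑ j, ∑ k, ∑ l, g i l * g j k * ξ i k * ξ j l := by
    simp only [Finset.mul_sum, ← Finset.sum_add_distrib]
    refine Finset.sum_congr rfl fun i _ => Finset.sum_congr rfl fun j _ =>
      Finset.sum_congr rfl fun k _ => Finset.sum_congr rfl fun l _ => ?_
    ring
  rw [hsplit, hswap]
  ring


/-- for a symmetric positive definite `g` and a tensor `Q` with the
Hessian-curvature symmetries, the Hessian sectional curvature is the constant `c`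
(i.e. `⟨Q̂(ξ),ξ⟩ = c⟨ξ,ξ⟩` for every symmetric 2-tensor `ξ`) iff
`Q_{ijkl} = (c/2)(g_{ij} g_{kl} + g_{il} g_{jk})`. -/
theorem constant_hessian_sectional_curvature_iff
    {q : ℕ} (g : Matrix (Fin q) (Fin q) ℝ) (hg : g.PosDef)
    (Q : Fin q → Fin q → Fin q → Fin q → ℝ)
    (hQ : ∀ i j k l, Q i j k l = Q k l i j ∧ Q i j k l = Q k j i l ∧
      Q i j k l = Q i l k j ∧ Q i j k l = Q j i l k)
    (c : ℝ) :
    (∀ ξ : Matrix (Fin q) (Fin q) ℝ, ξ.IsSymm →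
        ∑ i, ∑ j, ∑ k, ∑ l, Q i j k l * ξ i k * ξ j l
          = c * ∑ i, ∑ j, ∑ k, ∑ l, g i j * g k l * ξ i k * ξ j l) ↔
      (∀ i j k l, Q i j k l = (c / 2) * (g i j * g k l + g i l * g j k)) := by
  have hgs : g.IsSymm := by
    simpa [Matrix.IsHermitian, Matrix.IsSymm] using hg.isHermitian
  constructor
  · intro h i j k l
    refine sub_eq_zero.mp (eq_zero_of_form_eq_zero
      (fun i j k l => Q i j k l - (c / 2) * (g i j * g k l + g i l * g j k))
      ?_ ?_ ?_ ?_ i j k l)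
    · intro i j k l
      rw [(hQ i j k l).2.1, hgs.apply i j, hgs.apply j k]
      ring
    · intro i j k l
      rw [(hQ i j k l).2.2.1, hgs.apply j k, hgs.apply k l]
      ring
    · intro i j k l
      rw [(hQ i j k l).2.2.2, hgs.apply i j, hgs.apply k l]
      ring
    · intro ξ hξ
      simp only [contractForm, sub_mul, Finset.sum_sub_distrib]
      rw [h ξ hξ, sum_model_eq g hgs c ξ hξ, sub_self]
  · intro h ξ hξ
    simp only [h]
    exact sum_model_eq g hgs c ξ hξ
end
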